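/- Let d ≥ 1, let α = (α_1,…,α_d) with each α_i > −1 and β > −1, and let u be the Appell moment functional ⟨u, f⟩ = ∫_{T_d} f(x) x_1^{α_1}⋯x_d^{α_d} (1−|x|)^β dx on the d-simplex. Then u satisfies the matrix Pearson equation div(Φ u) = Ψ^t u, i.e., ⟨u, Φ∇f + Ψf⟩ = 0 for every polynomial f, where Φ is the symmetric d×d polynomial matrix with entries φ_ii = x_i(x_i − 1) and φ_ij = x_i x_j for i ≠ j, and Ψ is the d×1 polynomial vector with entries ψ_i = (|α| + β + d + 1) x_i − (α_i + 1). In particular deg Φ = 2 and deg Ψ = 1, so u satisfies a Pearson equation with s = max{deg Φ − 2, deg Ψ − 1} = 0 (u is classical). -/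

import Mathlib

open MvPolynomial Matrix Finset MeasureTheory

noncomputable section

/-- Real polynomials in `d` variables. -/
abbrev MPoly (d : ℕ) := MvPolynomial (Fin d) ℝ

/-- A moment functional: a linear functional on `MPoly d`. -/
abbrev MomF (d : ℕ) := MPoly d →ₗ[ℝ] ℝ

/-- `r_n = binom(n + d - 1, n)`, the dimension of the space of homogeneous
polynomials of degree `n` in `d` variables. -/
def rdim (d n : ℕ) : ℕ := (n + d - 1).choose n

/-- Entrywise application of a moment functional to a polynomial matrix. -/
def mApply {d : ℕ} (u : MomF d) {m n : Type*} (M : Matrix m n (MPoly d)) : Matrix m n ℝ :=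
  Matrix.of fun i j => u (M i j)

/-- The matrix Pearson equation `div(Φ u) = Ψᵗ u`, i.e. `⟨u, Φ ∇f + Ψ f⟩ = 0`
for every polynomial `f` (a system of `d` scalar equations). -/
def Pearson {d : ℕ} (u : MomF d) (Φ : Matrix (Fin d) (Fin d) (MPoly d))
    (Ψ : Fin d → MPoly d) : Prop :=
  ∀ f : MPoly d, ∀ i : Fin d, u (∑ j, Φ i j * pderiv j f + Ψ i * f) = 0

/-- Degree of a polynomial matrix: max of total degrees of the entries. -/
def matDeg {d : ℕ} {m n : Type*} [Fintype m] [Fintype n]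
    (M : Matrix m n (MPoly d)) : ℕ :=
  Finset.univ.sup fun p : m × n => (M p.1 p.2).totalDegree

/-- Degree of a polynomial (column) vector. -/
def vecDeg {d : ℕ} {m : Type*} [Fintype m] (v : m → MPoly d) : ℕ :=
  Finset.univ.sup fun i => (v i).totalDegree

/-- The Jacobian `∇ℙᵗ`: the `d × m` matrix with `(i,k)` entry `∂ᵢ P k`. -/
def gradT {d m : ℕ} (P : Fin m → MPoly d) : Matrix (Fin d) (Fin m) (MPoly d) :=
  Matrix.of fun i k => pderiv i (P k)

/-- The Kronecker product `I_d ⊗ ℙᵗ`: the block-diagonal `d × (d·m)` matrix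
whose `d` diagonal blocks equal the row vector `ℙᵗ`. -/
def kronIdRow {d m : ℕ} (P : Fin m → MPoly d) :
    Matrix (Fin d) (Fin d × Fin m) (MPoly d) :=
  Matrix.of fun i jk => if i = jk.1 then P jk.2 else 0

/-- A constant real matrix viewed as a polynomial matrix. -/
def cmap {d : ℕ} {m n : Type*} (F : Matrix m n ℝ) : Matrix m n (MPoly d) :=
  F.map MvPolynomial.C

/-- `{ℙ_n}` is a weak orthogonal polynomial system with respect to `u`:
each entry of `ℙ_n` has total degree `n`, the entries of `ℙ_0, …, ℙ_n` form a
basis of the polynomials of total degree at most `n` (spanning + linear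
independence), `⟨u, ℙ_n ℙ_mᵗ⟩ = 0` for `n ≠ m`, and `H_n = ⟨u, ℙ_n ℙ_nᵗ⟩` is
nonsingular. -/
structure IsWOPS {d : ℕ} (u : MomF d) (P : (n : ℕ) → Fin (rdim d n) → MPoly d) : Prop where
  deg : ∀ n k, (P n k).totalDegree = n
  span : ∀ n : ℕ, MvPolynomial.restrictTotalDegree (Fin d) ℝ n ≤
    Submodule.span ℝ {g | ∃ m ≤ n, ∃ k, P m k = g}
  indep : LinearIndependent ℝ (fun p : (n : ℕ) × Fin (rdim d n) => P p.1 p.2)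
  orth : ∀ m n, m ≠ n → ∀ j k, u (P m j * P n k) = 0
  Hdet : ∀ n, (Matrix.of fun j k : Fin (rdim d n) => u (P n j * P n k)).det ≠ 0

/-- The matrix `H_n = ⟨u, ℙ_n ℙ_nᵗ⟩`. -/
def Hmat {d : ℕ} (u : MomF d) (P : (n : ℕ) → Fin (rdim d n) → MPoly d) (n : ℕ) :
    Matrix (Fin (rdim d n)) (Fin (rdim d n)) ℝ :=
  Matrix.of fun j k => u (P n j * P n k)

/-- The second-order differential operator
`L[f] = Σ_{i,j} φ_ij ∂²f/∂xᵢ∂xⱼ + Σ_i ψ_i ∂f/∂xᵢ` associated with `Φ`, `Ψ`. -/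
def Lop {d : ℕ} (Φ : Matrix (Fin d) (Fin d) (MPoly d)) (Ψ : Fin d → MPoly d)
    (f : MPoly d) : MPoly d :=
  (∑ i, ∑ j, Φ i j * pderiv i (pderiv j f)) + ∑ i, Ψ i * pderiv i f

/-- The `d`-simplex `T_d = {x : xᵢ ≥ 0, 1 − |x| ≥ 0}`. -/
def simplexSet (d : ℕ) : Set (Fin d → ℝ) :=
  {x | (∀ i, 0 ≤ x i) ∧ ∑ i, x i ≤ 1}

/-- The Appell weight `x^α (1 − |x|)^β` (real powers). -/
def appellWeight {d : ℕ} (α : Fin d → ℝ) (β : ℝ) (x : Fin d → ℝ) : ℝ :=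
  (∏ i, x i ^ α i) * (1 - ∑ i, x i) ^ β

/-- The Appell moment functional `⟨u, f⟩ = ∫_{T_d} f(x) x^α (1 − |x|)^β dx`. -/
def appellInt {d : ℕ} (α : Fin d → ℝ) (β : ℝ) (f : MPoly d) : ℝ :=
  ∫ x in simplexSet d, MvPolynomial.eval x f * appellWeight α β x

open scoped ENNReal

/-- The (extended) weight on the simplex of size `t`. -/
def appellG {d : ℕ} (a : Fin d → ℝ) (b t : ℝ) (y : Fin d → ℝ) : ℝ≥0∞ :=
  Set.indicator {y : Fin d → ℝ | (∀ i, 0 ≤ y i) ∧ ∑ i, y i ≤ t}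
    (fun y => ENNReal.ofReal ((∏ i, y i ^ a i) * (t - ∑ i, y i) ^ b)) y

lemma measurableSet_simplex_aux (d : ℕ) (t : ℝ) :
    MeasurableSet {y : Fin d → ℝ | (∀ i, 0 ≤ y i) ∧ ∑ i, y i ≤ t} := by
  rw [Set.ofPred_and, Set.ofPred_forall]
  exact (MeasurableSet.iInter fun i => measurableSet_le measurable_const
    (measurable_pi_apply i)).inter (measurableSet_le (by fun_prop) measurable_const)

lemma appellG_measurable {d : ℕ} (a : Fin d → ℝ) (b t : ℝ) : Measurable (appellG a b t) := by
  apply Measurable.indicator _ (measurableSet_simplex_aux d t)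
  fun_prop

lemma appellG_smul {d : ℕ} (a : Fin d → ℝ) (b t : ℝ) (ht : 0 < t) (y : Fin d → ℝ) :
    appellG a b t (t • y) = ENNReal.ofReal (t ^ ((∑ i, a i) + b)) * appellG a b 1 y := by
  unfold appellG
  by_cases h : (∀ i, 0 ≤ y i) ∧ ∑ i, y i ≤ 1
  · have h' : (∀ i, 0 ≤ (t • y) i) ∧ ∑ i, (t • y) i ≤ t := by
      refine ⟨fun i => mul_nonneg ht.le (h.1 i), ?_⟩
      simp only [Pi.smul_apply, smul_eq_mul, ← Finset.mul_sum]
      nlinarith [h.2]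
    rw [Set.indicator_of_mem (by exact h'), Set.indicator_of_mem (by exact h),
      ← ENNReal.ofReal_mul (by positivity)]
    congr 1
    simp only [Pi.smul_apply, smul_eq_mul, ← Finset.mul_sum]
    rw [show t - t * ∑ i, y i = t * (1 - ∑ i, y i) by ring,
      Real.mul_rpow ht.le (by linarith [h.2]), Real.rpow_add ht, Real.rpow_sum_of_pos ht,
      Finset.prod_congr rfl (fun i _ => Real.mul_rpow ht.le (h.1 i)), Finset.prod_mul_distrib]
    ring
  · have h' : ¬ ((∀ i, 0 ≤ (t • y) i) ∧ ∑ i, (t • y) i ≤ t) := by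
      contrapose! h
      simp only [Pi.smul_apply, smul_eq_mul, ← Finset.mul_sum] at h
      refine ⟨fun i => nonneg_of_mul_nonneg_right (h.1 i) ht, ?_⟩
      by_contra! hc
      nlinarith [h.2]
    rw [Set.indicator_of_notMem (by exact h'), Set.indicator_of_notMem (by exact h), mul_zero]

/-- The Dirichlet integral. -/
def dirL {d : ℕ} (a : Fin d → ℝ) (b : ℝ) : ℝ≥0∞ := ∫⁻ y, appellG a b 1 y

lemma lintegral_appellG {d : ℕ} (a : Fin d → ℝ) (b t : ℝ) (ht : 0 < t) :
    ∫⁻ y, appellG a b t y = ENNReal.ofReal (t ^ ((∑ i, a i) + b + d)) * dirL a b := by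
  have h := Measure.map_addHaar_smul (volume : Measure (Fin d → ℝ)) ht.ne'
  have h1 : ∫⁻ y, appellG a b t (t • y) = ENNReal.ofReal |(t ^ d)⁻¹| * ∫⁻ y, appellG a b t y := by
    rw [← lintegral_map (f := appellG a b t) (g := fun y => t • y) (appellG_measurable a b t)
      (measurable_const_smul t), h, lintegral_smul_measure]
    simp
  simp only [appellG_smul a b t ht] at h1
  rw [lintegral_const_mul _ (appellG_measurable a b 1)] at h1
  rw [abs_of_pos (by positivity)] at h1
  have h2 : ENNReal.ofReal (t ^ d) * ENNReal.ofReal (t ^ d)⁻¹ = 1 := by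
    rw [← ENNReal.ofReal_mul (by positivity), mul_inv_cancel₀ (by positivity), ENNReal.ofReal_one]
  calc _ = ENNReal.ofReal (t ^ d) * (ENNReal.ofReal (t ^ d)⁻¹ * ∫⁻ y, appellG a b t y) := by
        rw [← mul_assoc, h2, one_mul]
    _ = _ := by
        rw [← h1, ← mul_assoc, ← ENNReal.ofReal_mul (by positivity), mul_comm (t ^ d),
          ← Real.rpow_natCast, ← Real.rpow_add ht]
        rfl

lemma beta_lintegral (p q : ℝ) (hp : -1 < p) (hq : -1 < q) :
    ∫⁻ t in Set.Ioo (0:ℝ) 1, ENNReal.ofReal (t ^ p) * ENNReal.ofReal ((1 - t) ^ q)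
      = ENNReal.ofReal (ProbabilityTheory.beta (p + 1) (q + 1)) := by
  have hB := ProbabilityTheory.beta_pos (α := p + 1) (β := q + 1) (by linarith) (by linarith)
  have h := ProbabilityTheory.lintegral_betaPDF_eq_one (α := p + 1) (β := q + 1)
    (by linarith) (by linarith)
  rw [ProbabilityTheory.lintegral_betaPDF] at h
  set B := ProbabilityTheory.beta (p + 1) (q + 1)
  have h3 : ∫⁻ t in Set.Ioo (0:ℝ) 1, ENNReal.ofReal (t ^ p) * ENNReal.ofReal ((1 - t) ^ q)
      = ∫⁻ t in Set.Ioo (0:ℝ) 1, ENNReal.ofReal B *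
        ENNReal.ofReal (1 / B * t ^ (p + 1 - 1) * (1 - t) ^ (q + 1 - 1)) := by
    refine setLIntegral_congr_fun measurableSet_Ioo fun t ht => ?_
    have := Real.rpow_nonneg ht.1.le p
    rw [← ENNReal.ofReal_mul this, ← ENNReal.ofReal_mul hB.le]
    congr 1
    field_simp
    simp
  rw [h3, lintegral_const_mul _ (by fun_prop), h, mul_one]

lemma appellG_insertNth {d : ℕ} (i : Fin (d + 1)) (a : Fin (d + 1) → ℝ) (b t : ℝ)
    (y : Fin d → ℝ) (ht : 0 ≤ t) :
    appellG a b 1 (i.insertNth t y) =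
      ENNReal.ofReal (t ^ a i) * appellG (fun j => a (i.succAbove j)) b (1 - t) y := by
  unfold appellG
  have key : ((∀ j, 0 ≤ (i.insertNth t y : Fin (d + 1) → ℝ) j) ∧
      ∑ j, (i.insertNth t y : Fin (d + 1) → ℝ) j ≤ 1) ↔
      ((∀ j, 0 ≤ y j) ∧ ∑ j, y j ≤ 1 - t) := by
    rw [Fin.sum_univ_succAbove _ i, Fin.forall_iff_succAbove i]
    simp [ht, le_sub_iff_add_le']
  by_cases h : (∀ j, 0 ≤ y j) ∧ ∑ j, y j ≤ 1 - t
  · rw [Set.indicator_of_mem (by exact key.2 h), Set.indicator_of_mem (by exact h),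
      ← ENNReal.ofReal_mul (by positivity)]
    congr 1
    rw [Fin.sum_univ_succAbove _ i, Fin.prod_univ_succAbove _ i]
    simp [mul_assoc, sub_sub]
  · rw [Set.indicator_of_notMem (by exact fun h' => h (key.1 h')), Set.indicator_of_notMem (by exact h),
      mul_zero]

lemma appellG_eq_zero {d : ℕ} (a : Fin d → ℝ) (b t : ℝ) (ht : t < 0) (y : Fin d → ℝ) :
    appellG a b t y = 0 := by
  apply Set.indicator_of_notMem
  rintro ⟨h1, h2⟩
  have := Finset.sum_nonneg (s := Finset.univ) fun i _ => h1 i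
  linarith

lemma appellG_insertNth_neg {d : ℕ} (i : Fin (d + 1)) (a : Fin (d + 1) → ℝ) (b t : ℝ)
    (y : Fin d → ℝ) (ht : t < 0) : appellG a b 1 (i.insertNth t y) = 0 := by
  apply Set.indicator_of_notMem
  rintro ⟨h1, h2⟩
  have := h1 i
  simp at this
  linarith

lemma dirL_succ {d : ℕ} (i : Fin (d + 1)) (a : Fin (d + 1) → ℝ) (b : ℝ)
    (ha : ∀ i, -1 < a i) (hb : -1 < b) :
    dirL a b = dirL (fun j => a (i.succAbove j)) b * ENNReal.ofReal
      (ProbabilityTheory.beta (a i + 1) ((∑ j, a (i.succAbove j)) + b + d + 1)) := by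
  set a' : Fin d → ℝ := fun j => a (i.succAbove j) with ha'
  have hem := (volume_preserving_piFinSuccAbove (fun _ : Fin (d + 1) => ℝ) i).symm _
  have h1 : dirL a b = ∫⁻ t : ℝ, ∫⁻ y : Fin d → ℝ, appellG a b 1 (i.insertNth t y) := by
    unfold dirL
    rw [← hem.map_eq, lintegral_map_equiv, Measure.volume_eq_prod, lintegral_prod]
    · rfl
    · exact ((appellG_measurable a b 1).comp (MeasurableEquiv.measurable _)).aemeasurable
  have hs : -1 < (∑ j, a' j) + b + d := by
    have : 0 ≤ ∑ j, (a' j + 1) := Finset.sum_nonneg fun j _ => by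
      have := ha (i.succAbove j)
      simp only [ha']; linarith
    rw [Finset.sum_add_distrib] at this
    simp at this
    linarith
  rw [h1, ← beta_lintegral _ _ (ha i) hs, ← lintegral_const_mul _ (by fun_prop),
    ← lintegral_indicator measurableSet_Ioo]
  apply lintegral_congr_ae
  have e0 : ∀ᵐ t : ℝ, t ≠ 0 := by simp [ae_iff]
  have e1 : ∀ᵐ t : ℝ, t ≠ 1 := by simp [ae_iff]
  filter_upwards [e0, e1] with t h0 h1
  by_cases ht : t ∈ Set.Ioo (0:ℝ) 1
  · rw [Set.indicator_of_mem ht]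
    simp only [appellG_insertNth i a b t _ ht.1.le]
    rw [lintegral_const_mul _ (appellG_measurable _ _ _), lintegral_appellG _ _ _ (by linarith [ht.2])]
    simp only [ha']
    ring
  · rw [Set.indicator_of_notMem ht]
    rcases lt_or_gt_of_ne h0 with h0 | h0
    · simp [appellG_insertNth_neg i a b t _ h0]
    · have : 1 < t := lt_of_le_of_ne (by by_contra! h; exact ht ⟨h0, h⟩) h1.symm
      simp [appellG_insertNth i a b t _ h0.le, appellG_eq_zero _ _ (1 - t) (by linarith)]

lemma dirL_ne_top {d : ℕ} (a : Fin d → ℝ) (b : ℝ) (ha : ∀ i, -1 < a i) (hb : -1 < b) :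
    dirL a b ≠ ⊤ := by
  induction d with
  | zero =>
    unfold dirL appellG
    rw [lintegral_unique]
    apply ENNReal.mul_ne_top
    · simp [Set.indicator]
    · simp
  | succ d ih =>
    rw [dirL_succ 0 a b ha hb]
    exact ENNReal.mul_ne_top (ih _ fun j => ha _) ENNReal.ofReal_ne_top

lemma beta_rec (s t : ℝ) (hs : 0 < s) (ht : 0 < t) :
    (s + t) * ProbabilityTheory.beta (s + 1) t = s * ProbabilityTheory.beta s t := by
  unfold ProbabilityTheory.beta
  rw [show s + 1 + t = s + t + 1 by ring, Real.Gamma_add_one hs.ne',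
    Real.Gamma_add_one (by positivity)]
  have := Real.Gamma_pos_of_pos (add_pos hs ht)
  field_simp

lemma dirL_rec {d : ℕ} (i : Fin d) (a : Fin d → ℝ) (b : ℝ)
    (ha : ∀ i, -1 < a i) (hb : -1 < b) :
    ((∑ j, a j) + b + d + 1) * (dirL (a + Pi.single i 1) b).toReal =
      (a i + 1) * (dirL a b).toReal := by
  cases d with
  | zero => exact i.elim0
  | succ d =>
    have ha2 : ∀ j, -1 < (a + Pi.single i 1 : Fin (d + 1) → ℝ) j := by
      intro j
      have : (0:ℝ) ≤ (Pi.single i 1 : Fin (d + 1) → ℝ) j := by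
        by_cases h : j = i
        · subst h; simp
        · simp [h]
      have := ha j
      simp only [Pi.add_apply]; linarith
    have hs : -1 < (∑ j, a (i.succAbove j)) + b + d := by
      have : 0 ≤ ∑ j, (a (i.succAbove j) + 1) := Finset.sum_nonneg fun j _ => by
        have := ha (i.succAbove j)
        linarith
      rw [Finset.sum_add_distrib] at this
      simp at this
      linarith
    have hai := ha i
    rw [dirL_succ i _ b ha2 hb, dirL_succ i a b ha hb]
    simp only [Pi.add_apply, Pi.single_eq_same, ne_eq, Fin.succAbove_ne, not_false_eq_true,
      Pi.single_eq_of_ne, add_zero, ENNReal.toReal_mul]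
    set S := ∑ j, a (i.succAbove j) with hS
    rw [ENNReal.toReal_ofReal (ProbabilityTheory.beta_pos (by linarith) (by linarith)).le,
      ENNReal.toReal_ofReal (ProbabilityTheory.beta_pos (by linarith) (by linarith)).le]
    have := beta_rec (a i + 1) (S + b + d + 1) (by linarith) (by linarith)
    rw [Fin.sum_univ_succAbove _ i]
    push_cast
    linear_combination (dirL (fun j => a (i.succAbove j)) b).toReal * this

lemma dirL_eq {d : ℕ} (a : Fin d → ℝ) (b : ℝ) :
    dirL a b = ∫⁻ x in simplexSet d, ENNReal.ofReal (appellWeight a b x) := by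
  unfold dirL appellG
  exact lintegral_indicator (measurableSet_simplex_aux d 1) _

lemma measurableSet_simplexSet (d : ℕ) : MeasurableSet (simplexSet d) :=
  measurableSet_simplex_aux d 1

lemma appellWeight_measurable {d : ℕ} (a : Fin d → ℝ) (b : ℝ) :
    Measurable (appellWeight a b) := by
  unfold appellWeight
  fun_prop

lemma appellWeight_nonneg {d : ℕ} (a : Fin d → ℝ) (b : ℝ) :
    0 ≤ᵐ[volume.restrict (simplexSet d)] appellWeight a b := by
  refine ae_restrict_of_forall_mem (measurableSet_simplexSet d) fun x hx => ?_
  exact mul_nonneg (Finset.prod_nonneg fun i _ => Real.rpow_nonneg (hx.1 i) _)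
    (Real.rpow_nonneg (by linarith [hx.2]) _)

lemma appellWeight_integrable {d : ℕ} (a : Fin d → ℝ) (b : ℝ)
    (ha : ∀ i, -1 < a i) (hb : -1 < b) :
    IntegrableOn (appellWeight a b) (simplexSet d) := by
  refine ⟨(appellWeight_measurable a b).aestronglyMeasurable, ?_⟩
  rw [hasFiniteIntegral_iff_ofReal (appellWeight_nonneg a b), ← dirL_eq]
  exact (dirL_ne_top a b ha hb).lt_top

lemma appellWeight_integral {d : ℕ} (a : Fin d → ℝ) (b : ℝ) :
    ∫ x in simplexSet d, appellWeight a b x = (dirL a b).toReal := by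
  rw [integral_eq_lintegral_of_nonneg_ae (appellWeight_nonneg a b)
    (appellWeight_measurable a b).aestronglyMeasurable, dirL_eq]

lemma monomial_mul_weight {d : ℕ} (α : Fin d → ℝ) (β : ℝ) (hα : ∀ i, -1 < α i)
    (n : Fin d →₀ ℕ) (c : ℝ) (x : Fin d → ℝ) (hx : x ∈ simplexSet d) :
    MvPolynomial.eval x (monomial n c) * appellWeight α β x =
      c * appellWeight (fun i => α i + n i) β x := by
  rw [MvPolynomial.eval_monomial, Finsupp.prod_fintype _ _ (by simp)]
  unfold appellWeight
  have : ∀ i ∈ Finset.univ, x i ^ (α i + n i) = x i ^ α i * x i ^ n i := by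
    intro i _
    rcases Nat.eq_zero_or_pos (n i) with h | h
    · simp [h]
    · apply Real.rpow_add_natCast' (hx.1 i)
      have : (1:ℝ) ≤ n i := by exact_mod_cast h
      linarith [hα i]
  rw [Finset.prod_congr rfl this, Finset.prod_mul_distrib]
  ring

lemma shift_gt {d : ℕ} {α : Fin d → ℝ} (hα : ∀ i, -1 < α i) (n : Fin d →₀ ℕ) (i : Fin d) :
    -1 < α i + n i := by
  have : (0:ℝ) ≤ n i := Nat.cast_nonneg _
  linarith [hα i]

lemma poly_integrable {d : ℕ} (α : Fin d → ℝ) (β : ℝ) (hα : ∀ i, -1 < α i) (hβ : -1 < β)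
    (f : MPoly d) :
    IntegrableOn (fun x => MvPolynomial.eval x f * appellWeight α β x) (simplexSet d) := by
  induction f using MvPolynomial.induction_on' with
  | monomial n c =>
    exact IntegrableOn.congr_fun
      ((appellWeight_integrable (fun i => α i + n i) β (shift_gt hα n) hβ).const_mul c)
      (fun x hx => (monomial_mul_weight α β hα n c x hx).symm) (measurableSet_simplexSet d)
  | add p q hp hq =>
    simp only [map_add, add_mul]
    exact hp.add hq

lemma appellInt_monomial {d : ℕ} (α : Fin d → ℝ) (β : ℝ) (hα : ∀ i, -1 < α i)
    (n : Fin d →₀ ℕ) (c : ℝ) :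
    appellInt α β (monomial n c) = c * (dirL (fun i => α i + n i) β).toReal := by
  unfold appellInt
  rw [setIntegral_congr_fun (measurableSet_simplexSet d)
    (fun x hx => monomial_mul_weight α β hα n c x hx), integral_const_mul, appellWeight_integral]

lemma appellInt_add {d : ℕ} (α : Fin d → ℝ) (β : ℝ) (hα : ∀ i, -1 < α i) (hβ : -1 < β)
    (f g : MPoly d) : appellInt α β (f + g) = appellInt α β f + appellInt α β g := by
  unfold appellInt
  simp only [map_add, add_mul]
  exact integral_add (poly_integrable α β hα hβ f) (poly_integrable α β hα hβ g)

lemma pearson_poly_monomial {d : ℕ} (α : Fin d → ℝ) (β : ℝ) (i : Fin d) (n : Fin d →₀ ℕ) (c : ℝ) :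
    (∑ j, (if i = j then (X i * (X i - 1) : MPoly d) else X i * X j) *
        pderiv j (monomial n c) +
      (C ((∑ k, α k) + β + d + 1) * X i - C (α i + 1)) * monomial n c) =
    monomial (n + Finsupp.single i 1) (((∑ j, (α j + n j)) + β + d + 1) * c) +
      monomial n (-((α i + n i + 1) * c)) := by
  have h1 : ∀ j, (if i = j then (X i * (X i - 1) : MPoly d) else X i * X j) *
      pderiv j (monomial n c) = X i * (X j * pderiv j (monomial n c)) -
        if i = j then X i * pderiv i (monomial n c) else 0 := by
    intro j
    split_ifs with h
    · subst h; ring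
    · ring
  have hm : ∀ r s : ℝ, (monomial n (r * s) : MPoly d) = C r * monomial n s := by
    intro r s; rw [C_mul_monomial]
  have hX : ∀ s : ℝ, (monomial (n + Finsupp.single i 1) s : MPoly d) = X i * monomial n s := by
    intro s; rw [X, monomial_mul, one_mul, add_comm]
  have hn : ∀ j, (X j * pderiv j (monomial n c) : MPoly d) = C (n j : ℝ) * monomial n c := by
    intro j
    rw [X_mul_pderiv_monomial, C_mul_monomial, nsmul_eq_mul, ← map_natCast (C : ℝ →+* MPoly d),
      C_mul_monomial]
  simp only [h1, Finset.sum_sub_distrib, Finset.sum_ite_eq, Finset.mem_univ, if_true, hn,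
    ← Finset.mul_sum, ← Finset.sum_mul, ← map_sum, hX, ← neg_mul, hm, map_add, map_neg,
    Finset.sum_add_distrib]
  ring

lemma appell_pearson {d : ℕ} (α : Fin d → ℝ) (β : ℝ) (hα : ∀ i, -1 < α i) (hβ : -1 < β)
    (f : MPoly d) (i : Fin d) :
    appellInt α β (∑ j, (if i = j then (X i * (X i - 1) : MPoly d) else X i * X j) * pderiv j f +
      (C ((∑ k, α k) + β + d + 1) * X i - C (α i + 1)) * f) = 0 := by
  induction f using MvPolynomial.induction_on' with
  | monomial n c =>
    rw [pearson_poly_monomial, appellInt_add α β hα hβ, appellInt_monomial α β hα,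
      appellInt_monomial α β hα]
    have h := dirL_rec i (fun j => α j + n j) β (shift_gt hα n) hβ
    have e : ((fun j => α j + n j) + Pi.single i 1 : Fin d → ℝ) =
        fun j => α j + ((n + Finsupp.single i 1 : Fin d →₀ ℕ) j : ℝ) := by
      funext j
      by_cases hj : j = i
      · subst hj; simp [add_assoc]
      · simp [hj]
    rw [e] at h
    linear_combination c * h
  | add p q hp hq =>
    have h := appellInt_add α β hα hβ
      (∑ j, (if i = j then (X i * (X i - 1) : MPoly d) else X i * X j) * pderiv j p +
        (C ((∑ k, α k) + β + d + 1) * X i - C (α i + 1)) * p)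
      (∑ j, (if i = j then (X i * (X i - 1) : MPoly d) else X i * X j) * pderiv j q +
        (C ((∑ k, α k) + β + d + 1) * X i - C (α i + 1)) * q)
    rw [hp, hq, add_zero] at h
    rw [← h]
    congr 1
    simp only [map_add, mul_add, Finset.sum_add_distrib]
    ring

lemma totalDegree_XX {d : ℕ} (i j : Fin d) : (X i * X j : MPoly d).totalDegree = 2 := by
  rw [MvPolynomial.totalDegree_mul_of_isDomain (X_ne_zero _) (X_ne_zero _)]
  simp

/-- **Appell polynomials are classical.**
The Appell moment functional on the `d`-simplex satisfies the matrix Pearson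
equation `div(Φ u) = Ψᵗ u` with `φ_ii = xᵢ(xᵢ − 1)`, `φ_ij = xᵢ xⱼ` (`i ≠ j`),
`ψ_i = (|α| + β + d + 1) xᵢ − (αᵢ + 1)`; moreover `deg Φ = 2`, `deg Ψ = 1`,
so `s = max{deg Φ − 2, deg Ψ − 1} = 0`. -/
theorem appell_is_classical
    {d : ℕ} (hd : 1 ≤ d)
    (α : Fin d → ℝ) (hα : ∀ i, -1 < α i) (β : ℝ) (hβ : -1 < β)
    (Φ : Matrix (Fin d) (Fin d) (MPoly d))
    (hΦ : Φ = Matrix.of fun i j => if i = j then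
      MvPolynomial.X i * (MvPolynomial.X i - 1) else MvPolynomial.X i * MvPolynomial.X j)
    (Ψ : Fin d → MPoly d)
    (hΨ : Ψ = fun i => MvPolynomial.C ((∑ k, α k) + β + d + 1) * MvPolynomial.X i -
      MvPolynomial.C (α i + 1)) :
    (∀ (f : MPoly d) (i : Fin d),
      appellInt α β (∑ j, Φ i j * pderiv j f + Ψ i * f) = 0) ∧
    matDeg Φ = 2 ∧ vecDeg Ψ = 1 := by
  subst hΦ hΨ
  refine ⟨fun f i => appell_pearson α β hα hβ f i, ?_, ?_⟩
  · unfold matDeg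
    have key : ∀ p : Fin d × Fin d, ((Matrix.of fun i j => if i = j then
        (MvPolynomial.X i * (MvPolynomial.X i - 1) : MPoly d) else
          MvPolynomial.X i * MvPolynomial.X j) p.1 p.2).totalDegree = 2 := by
      rintro ⟨i, j⟩
      simp only [Matrix.of_apply]
      split_ifs with h
      · have h1 : (X i - 1 : MPoly d).totalDegree = 1 := by
          rw [sub_eq_add_neg, totalDegree_add_eq_left_of_totalDegree_lt] <;> simp
        have h2 : (X i - 1 : MPoly d) ≠ 0 := by
          intro h; rw [h] at h1; simp at h1
        rw [totalDegree_mul_of_isDomain (X_ne_zero _) h2, h1, totalDegree_X]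
      · exact totalDegree_XX i j
    simp only [key]
    exact Finset.sup_const ⟨(⟨0, hd⟩, ⟨0, hd⟩), Finset.mem_univ _⟩ 2
  · unfold vecDeg
    have hs : 0 < (∑ k, α k) + β + d + 1 := by
      have : 0 ≤ ∑ j, (α j + 1) := Finset.sum_nonneg fun j _ => by linarith [hα j]
      rw [Finset.sum_add_distrib] at this
      simp at this
      linarith
    have key : ∀ i : Fin d, (C ((∑ k, α k) + β + d + 1) * X i - C (α i + 1) : MPoly d).totalDegree
        = 1 := by
      intro i
      have h1 : (C ((∑ k, α k) + β + d + 1) * X i : MPoly d).totalDegree = 1 := by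
        rw [totalDegree_mul_of_isDomain (C_ne_zero.2 hs.ne') (X_ne_zero _), totalDegree_C,
          totalDegree_X]
      rw [sub_eq_add_neg, totalDegree_add_eq_left_of_totalDegree_lt, h1]
      rw [h1, totalDegree_neg, totalDegree_C]
      exact Nat.one_pos
    simp only [key]
    exact Finset.sup_const ⟨⟨0, hd⟩, Finset.mem_univ _⟩ 1
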